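/- Every circular composition λ different from (1,1) has a unique parent: λ is obtained from exactly one circular composition μ by exactly one application of a child rule, where the child rules are: (Type 1) replace μ_t by μ_t + |s_t(μ)| for some t ∈ {1,…,r}; (Type 2) insert the part |δ_t(μ)| after position t for some t ∈ {0,…,r} satisfying δ_t(μ) > μ_{t+1} or −δ_t(μ) > μ_t, where δ_t(μ) = n − 2 Σ_{j≤t} μ_j for μ a composition of n. -/

import Mathlib

/-!
The parent of a circular composition `l` of `n` is read off at the midpoint `n / 2`.

* If the midpoint is interior to a block `m`, say `l = X ++ m :: Y`, then `|s| < m` for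
  `s = ΣY - ΣX`, and the parent replaces `m` by `m - |s|` (inverse of type 1).
* If the midpoint is the common end of two blocks, say `l = X ++ p :: q :: Y`, then `p ≠ q`
  (`circular_halves`: equal blocks would be exchanged by `T`, giving 2-cycles, so `l = (1,1)`),
  and the parent deletes the larger of `p` and `q` (inverse of type 2). The deleted block has
  length exactly `|s|`, so this is the same shrinking `m ↦ m - |s|` followed by the removal of a
  zero part, which does not alter `T`.

Conversely a type 1 child has its midpoint inside the block that was enlarged, and a type 2 child
has it at the end of the inserted block, which is the larger of the two central ones; so the
rule, its position, and hence the parent are determined by `l` alone.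

Circularity passes to the parent because the shrinking is a factor map up to delays: for `s ≥ 0`
the map `π` that subtracts `s` exactly past the end of the central block is a surjection
`{1,…,n} → {1,…,n-s}` for which `π (T x)` is either `π x` or `T' (π x)`
(`circular_of_factor`, `circular_shrink_pos`); the case `s ≤ 0` is the mirror image.
-/

/-- A composition: a nonempty list of positive integers. -/
def IsComposition (l : List ℕ) : Prop := l ≠ [] ∧ ∀ x ∈ l, 0 < x

/-- The `i`-th translation parameter (0-indexed):
`s_i = (sum of parts after position i) - (sum of parts before position i)`. -/
def transParam (l : List ℕ) (i : ℕ) : ℤ :=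
  ((l.drop (i + 1)).sum : ℤ) - ((l.take i).sum : ℤ)

/-- The symmetric discrete interval exchange associated to `l`, as a map `ℤ → ℤ`
(acting on `{1, …, n}`, identity elsewhere): `x ∈ B_i` is sent to `x + s_i`. -/
def Texch (l : List ℕ) (x : ℤ) : ℤ :=
  x + ∑ i ∈ Finset.range l.length,
    (if ((l.take i).sum : ℤ) < x ∧ x ≤ ((l.take (i + 1)).sum : ℤ) then transParam l i else 0)

/-- The orbit of `x` under `T_l`. -/
def orbit (l : List ℕ) (x : ℤ) : Set ℤ := {y | ∃ k : ℕ, (Texch l)^[k] x = y}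

/-- The set of orbits of `T_l` on `{1, …, n}`. -/
def orbitsSet (l : List ℕ) : Set (Set ℤ) :=
  {S | ∃ x : ℤ, 1 ≤ x ∧ x ≤ (l.sum : ℤ) ∧ S = orbit l x}

/-- The number of orbits `γ(T_l)` of `T_l` on `{1, …, n}`. -/
noncomputable def numOrbits (l : List ℕ) : ℕ := (orbitsSet l).ncard

/-- A composition is circular if its symmetric discrete interval exchange is minimal,
i.e. has exactly one orbit. -/
def IsCircular (l : List ℕ) : Prop := numOrbits l = 1


/-- `δ_t = n - 2·(λ_1 + … + λ_t)` for a composition of `n`, with `t ∈ {0,…,r}`. -/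
def deltaParam (l : List ℕ) (t : ℕ) : ℤ := (l.sum : ℤ) - 2 * ((l.take t).sum : ℤ)

/-- The child rules of the tree of circular compositions.  `IsChild μ c` holds when `c` is
obtained from `μ` by one application of a child rule:
* Type 1: replace the part `μ_t` by `μ_t + |s_t(μ)|` for some index `t` of `μ`;
* Type 2: insert the part `|δ_t(μ)|` after position `t ∈ {0,…,r}`, provided
  `δ_t(μ) > μ_{t+1}` or `-δ_t(μ) > μ_t` (1-based; the comparison with a nonexistent
  boundary part is dropped). -/
def IsChild (μ c : List ℕ) : Prop :=
  (∃ t < μ.length, c = μ.set t (μ.getD t 0 + (transParam μ t).natAbs)) ∨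
  (∃ t ≤ μ.length,
    ((t < μ.length ∧ (μ.getD t 0 : ℤ) < deltaParam μ t) ∨
      (0 < t ∧ (μ.getD (t - 1) 0 : ℤ) < -deltaParam μ t)) ∧
    c = μ.insertIdx t (deltaParam μ t).natAbs)

/-! ### The exchange on an explicit block decomposition -/

/-- Value of `T` on the block `m` of `X ++ m :: Y`. -/
lemma Texch_block (X Y : List ℕ) (m : ℕ) (x : ℤ) (h1 : (X.sum : ℤ) < x)
    (h2 : x ≤ (X.sum : ℤ) + m) :
    Texch (X ++ m :: Y) x = x + ((Y.sum : ℤ) - X.sum) := by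
  have hmono := List.monotone_sum_take (X ++ m :: Y)
  have e0 : ((X ++ m :: Y).take X.length).sum = X.sum := by simp
  have e1 : ((X ++ m :: Y).take (X.length + 1)).sum = X.sum + m := by
    simp [List.take_append, List.take_of_length_le]
  unfold Texch
  rw [Finset.sum_eq_single X.length]
  · rw [e0, e1, if_pos ⟨h1, by omega⟩]
    simp [-Nat.cast_list_sum, transParam, List.drop_append, List.drop_of_length_le]
  · intro i _ hne
    rw [if_neg]
    rintro ⟨ha, hb⟩
    rcases lt_or_gt_of_ne hne with h | h
    · have := hmono (show i + 1 ≤ X.length from h)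
      simp only [e0] at this
      omega
    · have := hmono (show X.length + 1 ≤ i from h)
      simp only [e1] at this
      omega
  · intro h
    simp at h

/-- Every point of `{1,…,n}` lies in some block. -/
lemma exists_block (l : List ℕ) (x : ℤ) (h1 : 1 ≤ x) (h2 : x ≤ (l.sum : ℤ)) :
    ∃ (X : List ℕ) (m : ℕ) (Y : List ℕ), l = X ++ m :: Y ∧ (X.sum : ℤ) < x ∧ x ≤ (X.sum : ℤ) + m := by
  induction l generalizing x with
  | nil => simp at h2; omega
  | cons a l ih =>
    by_cases h : x ≤ a
    · exact ⟨[], a, l, by simp, by simp [-Nat.cast_list_sum]; omega, by simpa using h⟩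
    · simp only [List.sum_cons, Nat.cast_add] at h2
      obtain ⟨X, m, Y, rfl, h3, h4⟩ := ih (x - a) (by omega) (by omega)
      exact ⟨a :: X, m, Y, by simp, by simp [-Nat.cast_list_sum]; omega, by simp [-Nat.cast_list_sum]; omega⟩

lemma Texch_mem (l : List ℕ) (x : ℤ) (h1 : 1 ≤ x) (h2 : x ≤ (l.sum : ℤ)) :
    1 ≤ Texch l x ∧ Texch l x ≤ (l.sum : ℤ) := by
  obtain ⟨X, m, Y, rfl, h3, h4⟩ := exists_block l x h1 h2
  rw [Texch_block X Y m x h3 h4]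
  simp only [List.sum_append, List.sum_cons, Nat.cast_add] at h2 ⊢
  omega

lemma iterate_mem (l : List ℕ) (k : ℕ) (x : ℤ) (h1 : 1 ≤ x) (h2 : x ≤ (l.sum : ℤ)) :
    1 ≤ (Texch l)^[k] x ∧ (Texch l)^[k] x ≤ (l.sum : ℤ) := by
  induction k with
  | zero => exact ⟨h1, h2⟩
  | succ k ih =>
    rw [Function.iterate_succ_apply']
    exact Texch_mem l _ ih.1 ih.2

/-- Zero parts are invisible to `T` on `{1,…,n}`. -/
lemma Texch_zero_part (X Y : List ℕ) (x : ℤ) (h1 : 1 ≤ x) (h2 : x ≤ ((X ++ Y).sum : ℤ)) :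
    Texch (X ++ 0 :: Y) x = Texch (X ++ Y) x := by
  by_cases h : x ≤ (X.sum : ℤ)
  · obtain ⟨X1, m, X2, rfl, h3, h4⟩ := exists_block X x h1 h
    have a := Texch_block X1 (X2 ++ 0 :: Y) m x h3 h4
    have b := Texch_block X1 (X2 ++ Y) m x h3 h4
    simp only [List.append_assoc, List.cons_append] at a b ⊢
    rw [a, b]
    simp
  · simp only [List.sum_append, Nat.cast_add] at h2
    obtain ⟨X1, m, X2, rfl, h3, h4⟩ := exists_block Y (x - X.sum) (by omega) (by omega)
    have a := Texch_block (X ++ 0 :: X1) X2 m x (by simp [-Nat.cast_list_sum]; omega) (by simp [-Nat.cast_list_sum]; omega)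
    have b := Texch_block (X ++ X1) X2 m x (by simp [-Nat.cast_list_sum]; omega) (by simp [-Nat.cast_list_sum]; omega)
    simp only [List.append_assoc, List.cons_append] at a b ⊢
    rw [a, b]
    simp

/-! ### Circularity -/

lemma orbit_subset {l : List ℕ} {x y : ℤ} (h : y ∈ orbit l x) : orbit l y ⊆ orbit l x := by
  obtain ⟨k, rfl⟩ := h
  rintro z ⟨j, rfl⟩
  exact ⟨j + k, Function.iterate_add_apply _ _ _ _⟩

lemma isCircular_iff (l : List ℕ) : IsCircular l ↔ 0 < l.sum ∧
    ∀ x y : ℤ, 1 ≤ x → x ≤ (l.sum : ℤ) → 1 ≤ y → y ≤ (l.sum : ℤ) → y ∈ orbit l x := by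
  unfold IsCircular numOrbits
  rw [Set.ncard_eq_one]
  constructor
  · rintro ⟨S, hS⟩
    have key : ∀ x : ℤ, 1 ≤ x → x ≤ (l.sum : ℤ) → orbit l x = S := by
      intro x h1 h2
      have : orbit l x ∈ orbitsSet l := ⟨x, h1, h2, rfl⟩
      rwa [hS] at this
    refine ⟨?_, ?_⟩
    · have : S ∈ orbitsSet l := by rw [hS]; rfl
      obtain ⟨x, h1, h2, _⟩ := this
      omega
    · intro x y h1 h2 h3 h4
      rw [key x h1 h2, ← key y h3 h4]
      exact ⟨0, rfl⟩
  · rintro ⟨hpos, h⟩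
    refine ⟨orbit l 1, ?_⟩
    ext S
    constructor
    · rintro ⟨x, h1, h2, rfl⟩
      exact Set.Subset.antisymm
        (orbit_subset (h 1 x le_rfl (by omega) h1 h2))
        (orbit_subset (h x 1 h1 h2 le_rfl (by omega)))
    · rintro rfl
      exact ⟨1, le_rfl, by omega, rfl⟩

/-- Circularity passes to a factor, even when the factor map `f` makes some steps of `T_l`
invisible. -/
lemma circular_of_factor (l l' : List ℕ) (hpos : 0 < l'.sum) (f : ℤ → ℤ)
    (hsurj : ∀ y : ℤ, 1 ≤ y → y ≤ (l'.sum : ℤ) → ∃ x : ℤ, 1 ≤ x ∧ x ≤ (l.sum : ℤ) ∧ f x = y)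
    (hstep : ∀ x : ℤ, 1 ≤ x → x ≤ (l.sum : ℤ) →
      f (Texch l x) = f x ∨ f (Texch l x) = Texch l' (f x))
    (hc : IsCircular l) : IsCircular l' := by
  rw [isCircular_iff] at hc ⊢
  refine ⟨hpos, ?_⟩
  intro y z hy1 hy2 hz1 hz2
  obtain ⟨x, hx1, hx2, rfl⟩ := hsurj y hy1 hy2
  obtain ⟨w, hw1, hw2, rfl⟩ := hsurj z hz1 hz2
  obtain ⟨k, rfl⟩ := hc.2 x w hx1 hx2 hw1 hw2
  clear hw1 hw2 hz1 hz2
  induction k with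
  | zero => exact ⟨0, rfl⟩
  | succ k ih =>
    obtain ⟨j, hj⟩ := ih
    have hm := iterate_mem l k x hx1 hx2
    rw [Function.iterate_succ_apply']
    rcases hstep _ hm.1 hm.2 with h | h
    · exact ⟨j, by rw [h, hj]⟩
    · exact ⟨j + 1, by rw [h, Function.iterate_succ_apply', hj]⟩

lemma circular_drop_zero (X Y : List ℕ) (h : IsCircular (X ++ 0 :: Y)) :
    IsCircular (X ++ Y) := by
  have hp := ((isCircular_iff _).1 h).1
  refine circular_of_factor (X ++ 0 :: Y) (X ++ Y) (by simpa using hp) id ?_ ?_ h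
  · intro y h1 h2
    exact ⟨y, h1, by simpa using h2, rfl⟩
  · intro x h1 h2
    exact Or.inr (Texch_zero_part X Y x h1 (by simpa using h2))

/-- Shrinking the central block by its translation parameter `s ≥ 0`; here `k = m - s`.
The last `s` points of the block are identified with their images. -/
lemma circular_shrink_pos (X Y : List ℕ) (m k : ℕ) (hs : X.sum ≤ Y.sum)
    (hk : k + Y.sum = m + X.sum) (h : IsCircular (X ++ m :: Y)) :
    IsCircular (X ++ k :: Y) := by
  have hp := ((isCircular_iff _).1 h).1
  simp only [List.sum_append, List.sum_cons] at hp
  refine circular_of_factor (X ++ m :: Y) (X ++ k :: Y)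
    (by simp only [List.sum_append, List.sum_cons]; omega)
    (fun x => if x ≤ (X.sum : ℤ) + m then x else x - ((Y.sum : ℤ) - X.sum)) ?_ ?_ h
  · intro y h1 h2
    simp only [List.sum_append, List.sum_cons, Nat.cast_add] at h2 ⊢
    by_cases hy : y ≤ (X.sum : ℤ) + m
    · exact ⟨y, h1, by omega, if_pos hy⟩
    · refine ⟨y + ((Y.sum : ℤ) - X.sum), by omega, by omega, ?_⟩
      rw [if_neg (by omega)]
      omega
  · intro x h1 h2
    simp only [List.sum_append, List.sum_cons, Nat.cast_add] at h2
    by_cases hX : x ≤ (X.sum : ℤ)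
    · right
      obtain ⟨X1, j, X2, rfl, h3, h4⟩ := exists_block X x h1 hX
      have a := Texch_block X1 (X2 ++ m :: Y) j x h3 h4
      have b := Texch_block X1 (X2 ++ k :: Y) j x h3 h4
      simp only [List.append_assoc, List.cons_append] at a b ⊢
      simp only [List.sum_append, List.sum_cons, Nat.cast_add] at *
      rw [a, if_neg (by omega), if_pos (by omega), b]
      omega
    by_cases hM : x ≤ (X.sum : ℤ) + m
    · have a := Texch_block X Y m x (by omega) hM
      by_cases hK : x ≤ (X.sum : ℤ) + k
      · right
        have b := Texch_block X Y k x (by omega) hK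
        rw [a, if_pos (by omega), if_pos (by omega), b]
      · left
        rw [a, if_neg (by omega), if_pos (by omega)]
        omega
    · right
      obtain ⟨X1, j, X2, rfl, h3, h4⟩ := exists_block Y (x - (X.sum + m)) (by omega) (by omega)
      have a := Texch_block (X ++ m :: X1) X2 j x
        (by simp only [List.sum_append, List.sum_cons]; omega)
        (by simp only [List.sum_append, List.sum_cons]; omega)
      have b := Texch_block (X ++ k :: X1) X2 j
        (x - (((X1 ++ j :: X2).sum : ℤ) - X.sum))
        (by simp only [List.sum_append, List.sum_cons] at *; omega)
        (by simp only [List.sum_append, List.sum_cons] at *; omega)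
      simp only [List.append_assoc, List.cons_append] at a b ⊢
      simp only [List.sum_append, List.sum_cons, Nat.cast_add] at *
      rw [a, if_pos (by omega), if_neg (by omega), b]
      omega

/-- Mirror image of `circular_shrink_pos`: the translation parameter is `-d ≤ 0` and the first
`d` points of the block are identified with their images. -/
lemma circular_shrink_neg (X Y : List ℕ) (m k : ℕ) (hs : Y.sum ≤ X.sum)
    (hk : k + X.sum = m + Y.sum) (h : IsCircular (X ++ m :: Y)) :
    IsCircular (X ++ k :: Y) := by
  have hp := ((isCircular_iff _).1 h).1
  simp only [List.sum_append, List.sum_cons] at hp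
  refine circular_of_factor (X ++ m :: Y) (X ++ k :: Y)
    (by simp only [List.sum_append, List.sum_cons]; omega)
    (fun x => if x ≤ (X.sum : ℤ) then x else x - ((X.sum : ℤ) - Y.sum)) ?_ ?_ h
  · intro y h1 h2
    simp only [List.sum_append, List.sum_cons, Nat.cast_add] at h2 ⊢
    by_cases hy : y ≤ (X.sum : ℤ)
    · exact ⟨y, h1, by omega, if_pos hy⟩
    · refine ⟨y + ((X.sum : ℤ) - Y.sum), by omega, by omega, ?_⟩
      rw [if_neg (by omega)]
      omega
  · intro x h1 h2
    simp only [List.sum_append, List.sum_cons, Nat.cast_add] at h2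
    by_cases hX : x ≤ (X.sum : ℤ)
    · right
      obtain ⟨X1, j, X2, rfl, h3, h4⟩ := exists_block X x h1 hX
      have a := Texch_block X1 (X2 ++ m :: Y) j x h3 h4
      have b := Texch_block X1 (X2 ++ k :: Y) j x h3 h4
      simp only [List.append_assoc, List.cons_append] at a b ⊢
      simp only [List.sum_append, List.sum_cons, Nat.cast_add] at *
      rw [a, if_neg (by omega), if_pos (by omega), b]
      omega
    by_cases hM : x ≤ (X.sum : ℤ) + m
    · have a := Texch_block X Y m x (by omega) hM
      by_cases hK : x ≤ (X.sum : ℤ) + ((X.sum : ℤ) - Y.sum)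
      · left
        rw [a, if_pos (by omega), if_neg (by omega)]
        omega
      · right
        have b := Texch_block X Y k (x - ((X.sum : ℤ) - Y.sum)) (by omega) (by omega)
        rw [a, if_neg (by omega), if_neg (by omega), b]
        omega
    · right
      obtain ⟨X1, j, X2, rfl, h3, h4⟩ := exists_block Y (x - (X.sum + m)) (by omega) (by omega)
      have a := Texch_block (X ++ m :: X1) X2 j x
        (by simp only [List.sum_append, List.sum_cons]; omega)
        (by simp only [List.sum_append, List.sum_cons]; omega)
      have b := Texch_block (X ++ k :: X1) X2 j
        (x - ((X.sum : ℤ) - (X1 ++ j :: X2).sum))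
        (by simp only [List.sum_append, List.sum_cons] at *; omega)
        (by simp only [List.sum_append, List.sum_cons] at *; omega)
      simp only [List.append_assoc, List.cons_append] at a b ⊢
      simp only [List.sum_append, List.sum_cons, Nat.cast_add] at *
      rw [a, if_pos (by omega), if_neg (by omega), b]
      omega

/-- Two equal blocks meeting at the midpoint are exchanged by `T`, so circularity forces them
to have length `1` and to carry the whole sum. -/
lemma circular_halves (X Y : List ℕ) (p : ℕ) (hp : 0 < p) (hXY : X.sum = Y.sum)
    (h : IsCircular (X ++ p :: p :: Y)) : X.sum = 0 ∧ p = 1 := by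
  have hc := ((isCircular_iff _).1 h).2
  simp only [List.sum_append, List.sum_cons, Nat.cast_add] at hc
  have a := Texch_block X (p :: Y) p (X.sum + 1) (by omega) (by omega)
  have b := Texch_block (X ++ [p]) Y p (X.sum + 1 + p)
    (by simp only [List.sum_append, List.sum_cons, List.sum_nil]; omega)
    (by simp only [List.sum_append, List.sum_cons, List.sum_nil]; omega)
  simp only [List.append_assoc, List.cons_append, List.nil_append, List.sum_append,
    List.sum_cons, List.sum_nil, Nat.cast_add] at a b
  have horb : ∀ y ∈ orbit (X ++ p :: p :: Y) (X.sum + 1),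
      y = (X.sum : ℤ) + 1 ∨ y = (X.sum : ℤ) + 1 + p := by
    rintro y ⟨k, rfl⟩
    induction k with
    | zero => exact Or.inl rfl
    | succ k ih =>
      rw [Function.iterate_succ_apply']
      rcases ih with ih | ih
      · right; rw [ih, a]; omega
      · left; rw [ih, b]; omega
  have hp1 : p = 1 := by
    by_contra hne
    have := horb _ (hc (X.sum + 1) (X.sum + 2) (by omega) (by omega) (by omega) (by omega))
    omega
  refine ⟨?_, hp1⟩
  by_contra hne
  have := horb _ (hc (X.sum + 1) (X.sum) (by omega) (by omega) (by omega) (by omega))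
  omega

/-! ### Comparing decompositions of a list -/

/-- Two blocks of the same list whose interiors overlap coincide. -/
lemma block_unique (X Y X' Y' : List ℕ) (m m' : ℕ) (h : X ++ m :: Y = X' ++ m' :: Y')
    (h1 : X.sum < X'.sum + m') (h2 : X'.sum < X.sum + m) : X = X' ∧ m = m' ∧ Y = Y' := by
  induction X generalizing X' with
  | nil =>
    cases X' with
    | nil => simpa using h
    | cons a X' => simp at h h2; omega
  | cons b X ih =>
    cases X' with
    | nil => simp at h h1; omega
    | cons a X' =>
      simp at h h1 h2
      obtain ⟨rfl, h⟩ := h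
      have := ih X' h (by omega) (by omega)
      simpa using this

/-- A cut of a list does not fall strictly inside a block. -/
lemma no_cut_inside (X Y U V : List ℕ) (m : ℕ) (h : X ++ m :: Y = U ++ V)
    (h1 : X.sum < U.sum) (h2 : U.sum < X.sum + m) : False := by
  induction X generalizing U with
  | nil =>
    cases U with
    | nil => simp at h1
    | cons a U => simp at h h2; omega
  | cons b X ih =>
    cases U with
    | nil => simp at h1
    | cons a U =>
      simp at h h1 h2
      obtain ⟨rfl, h⟩ := h
      exact ih U h (by omega) (by omega)

/-- For positive parts, a cut of a list is determined by its partial sum. -/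
lemma cut_unique (U V U' V' : List ℕ) (h : U ++ V = U' ++ V') (hpos : ∀ x ∈ U ++ V, 0 < x)
    (hs : U.sum = U'.sum) : U = U' ∧ V = V' := by
  induction U generalizing U' with
  | nil =>
    cases U' with
    | nil => simpa using h
    | cons a U' =>
      have := hpos a (by rw [h]; simp)
      simp at hs; omega
  | cons b U ih =>
    have hb := hpos b (by simp)
    cases U' with
    | nil => simp at hs; omega
    | cons a U' =>
      simp at h hs
      obtain ⟨rfl, h⟩ := h
      have := ih U' h (fun x hx => hpos x (by simp at hx ⊢; tauto)) (by omega)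
      simpa using this

/-! ### The child rules in terms of decompositions -/

lemma insertIdx_append_length (X Y : List ℕ) (a : ℕ) :
    (X ++ Y).insertIdx X.length a = X ++ a :: Y := by
  induction X with
  | nil => simp
  | cons b X ih => simpa using ih

lemma insertIdx_append_succ (X Y : List ℕ) (p a : ℕ) :
    (X ++ p :: Y).insertIdx (X.length + 1) a = X ++ p :: a :: Y := by
  simpa using insertIdx_append_length (X ++ [p]) Y a

/-- The child rules without indices. The two type 2 disjuncts are the two signs of `δ_t`: the
inserted part `P` ends, respectively starts, at the midpoint of `c`, and exceeds the part on the
other side of it. -/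
lemma isChild_iff (μ c : List ℕ) : IsChild μ c ↔
    (∃ (X : List ℕ) (m : ℕ) (Y : List ℕ), μ = X ++ m :: Y ∧ c = X ++ (m + ((Y.sum : ℤ) - X.sum).natAbs) :: Y) ∨
    (∃ X q Y P, μ = X ++ q :: Y ∧ c = X ++ P :: q :: Y ∧ X.sum + P = q + Y.sum ∧ q < P) ∨
    (∃ X p Y P, μ = X ++ p :: Y ∧ c = X ++ p :: P :: Y ∧ X.sum + p = P + Y.sum ∧ p < P) := by
  have split : ∀ t < μ.length, ∃ X m Y, μ = X ++ m :: Y ∧ X.length = t := by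
    intro t ht
    exact ⟨μ.take t, μ[t], μ.drop (t + 1), by simp, by simp [-Nat.cast_list_sum]; omega⟩
  constructor
  · rintro (⟨t, ht, rfl⟩ | ⟨t, ht, (⟨ht', hd⟩ | ⟨ht', hd⟩), rfl⟩)
    · obtain ⟨X, m, Y, rfl, rfl⟩ := split t ht
      left
      refine ⟨X, m, Y, rfl, ?_⟩
      simp [-Nat.cast_list_sum, transParam, List.drop_append, List.drop_of_length_le]
    · obtain ⟨X, q, Y, rfl, rfl⟩ := split t ht'
      right; left
      simp [-Nat.cast_list_sum, deltaParam] at hd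
      refine ⟨X, q, Y, _, rfl, insertIdx_append_length _ _ _, ?_, ?_⟩
      all_goals simp [-Nat.cast_list_sum, deltaParam]; omega
    · obtain ⟨X, p, Y, rfl, hX⟩ := split (t - 1) (by omega)
      obtain rfl : t = X.length + 1 := by omega
      right; right
      simp [-Nat.cast_list_sum, deltaParam, List.take_append, List.take_of_length_le] at hd
      refine ⟨X, p, Y, (deltaParam (X ++ p :: Y) (X.length + 1)).natAbs, rfl,
        insertIdx_append_succ _ _ _ _, ?_, ?_⟩
      all_goals simp [-Nat.cast_list_sum, deltaParam, List.take_append, List.take_of_length_le]; omega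
  · rintro (⟨X, m, Y, rfl, rfl⟩ | ⟨X, q, Y, P, rfl, rfl, h1, h2⟩ | ⟨X, p, Y, P, rfl, rfl, h1, h2⟩)
    · left
      refine ⟨X.length, by simp, ?_⟩
      simp [-Nat.cast_list_sum, transParam, List.drop_append, List.drop_of_length_le]
    · right
      have hd : deltaParam (X ++ q :: Y) X.length = P := by
        simp [-Nat.cast_list_sum, deltaParam]; omega
      refine ⟨X.length, by simp, Or.inl ⟨by simp, ?_⟩, ?_⟩
      · rw [hd]; simpa using h2
      · rw [hd, insertIdx_append_length]
        simp
    · right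
      have hd : deltaParam (X ++ p :: Y) (X.length + 1) = -P := by
        simp [-Nat.cast_list_sum, deltaParam, List.take_append, List.take_of_length_le]; omega
      refine ⟨X.length + 1, by simp, Or.inr ⟨by simp, ?_⟩, ?_⟩
      · rw [hd]; simpa using h2
      · rw [hd, insertIdx_append_succ]
        simp

/-- Corollary 4.4: every circular composition other than `(1,1)` has a
unique parent among circular compositions, with respect to the child rules. -/
theorem uniqueParent (l : List ℕ) (hl : IsComposition l) (hc : IsCircular l)
    (hne : l ≠ [1, 1]) :
    ∃! μ : List ℕ, IsComposition μ ∧ IsCircular μ ∧ IsChild μ l := by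
  have hpos := hl.2
  have hn := ((isCircular_iff _).1 hc).1
  -- The block containing `⌈n / 2⌉` has the midpoint in its interior or as its right end.
  obtain ⟨X, m, Y, rfl, h1, h2⟩ :=
    exists_block l (((l.sum + 1) / 2 : ℕ) : ℤ) (by omega) (by omega)
  simp only [List.sum_append, List.sum_cons] at h1 h2 hn
  by_cases hb : X.sum + m = Y.sum
  · cases Y with
    | nil =>
      simp at hb
      have := hpos m (by simp)
      omega
    | cons q Y =>
    simp only [List.sum_cons] at *
    have hm := hpos m (by simp)
    have hq := hpos q (by simp)
    rcases lt_trichotomy q m with hlt | heq | hgt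
    · refine ⟨X ++ q :: Y, ⟨⟨by simp, fun x hx => hpos x (by simp at hx ⊢; tauto)⟩, ?_, ?_⟩, ?_⟩
      · exact circular_drop_zero X (q :: Y) (circular_shrink_pos X (q :: Y) m 0
          (by simp only [List.sum_cons]; omega) (by simp only [List.sum_cons]; omega) hc)
      · rw [isChild_iff]
        exact Or.inr (Or.inl ⟨X, q, Y, m, rfl, rfl, hb, hlt⟩)
      · rintro ν ⟨hν, _, hch⟩
        rw [isChild_iff] at hch
        rcases hch with ⟨X', m', Y', rfl, he⟩ | ⟨X', q', Y', P, rfl, he, h3, h4⟩ |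
          ⟨X', q', Y', P, rfl, he, h3, h4⟩
        · exfalso
          have hm' := hν.2 m' (by simp)
          have hsum := congrArg List.sum he
          simp only [List.sum_append, List.sum_cons] at hsum
          refine no_cut_inside X' Y' (X ++ [m]) (q :: Y) _ (by rw [← he]; simp) ?_ ?_ <;>
          · simp only [List.sum_append, List.sum_cons, List.sum_nil]; omega
        · have hsum := congrArg List.sum he
          simp only [List.sum_append, List.sum_cons] at hsum
          have := cut_unique (X ++ [m]) (q :: Y) (X' ++ [P]) (q' :: Y') (by simpa using he)
            (by simpa using hpos)
            (by simp only [List.sum_append, List.sum_cons, List.sum_nil]; omega)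
          simp at this
          simp [this]
        · exfalso
          have hsum := congrArg List.sum he
          simp only [List.sum_append, List.sum_cons] at hsum
          have := cut_unique (X ++ [m]) (q :: Y) (X' ++ [q']) (P :: Y') (by simpa using he)
            (by simpa using hpos)
            (by simp only [List.sum_append, List.sum_cons, List.sum_nil]; omega)
          simp at this
          omega
    · exfalso
      subst heq
      obtain ⟨hX, rfl⟩ := circular_halves X Y q hq (by omega) hc
      have hX' : X = [] := by
        cases X with
        | nil => rfl
        | cons a X => have := hpos a (by simp); simp at hX; omega
      have hY' : Y = [] := by
        cases Y with
        | nil => rfl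
        | cons a Y => have := hpos a (by simp); simp at hb; omega
      subst hX' hY'
      exact hne rfl
    · refine ⟨X ++ m :: Y, ⟨⟨by simp, fun x hx => hpos x (by simp at hx ⊢; tauto)⟩, ?_, ?_⟩, ?_⟩
      · have := circular_drop_zero (X ++ [m]) Y (circular_shrink_neg (X ++ [m]) Y q 0
          (by simp only [List.sum_append, List.sum_cons, List.sum_nil]; omega)
          (by simp only [List.sum_append, List.sum_cons, List.sum_nil]; omega)
          (by simpa using hc))
        simpa using this
      · rw [isChild_iff]
        exact Or.inr (Or.inr ⟨X, m, Y, q, rfl, rfl, hb, hgt⟩)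
      · rintro ν ⟨hν, _, hch⟩
        rw [isChild_iff] at hch
        rcases hch with ⟨X', m', Y', rfl, he⟩ | ⟨X', q', Y', P, rfl, he, h3, h4⟩ |
          ⟨X', q', Y', P, rfl, he, h3, h4⟩
        · exfalso
          have hm' := hν.2 m' (by simp)
          have hsum := congrArg List.sum he
          simp only [List.sum_append, List.sum_cons] at hsum
          refine no_cut_inside X' Y' (X ++ [m]) (q :: Y) _ (by rw [← he]; simp) ?_ ?_ <;>
          · simp only [List.sum_append, List.sum_cons, List.sum_nil]; omega
        · exfalso
          have hsum := congrArg List.sum he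
          simp only [List.sum_append, List.sum_cons] at hsum
          have := cut_unique (X ++ [m]) (q :: Y) (X' ++ [P]) (q' :: Y') (by simpa using he)
            (by simpa using hpos)
            (by simp only [List.sum_append, List.sum_cons, List.sum_nil]; omega)
          simp at this
          omega
        · have hsum := congrArg List.sum he
          simp only [List.sum_append, List.sum_cons] at hsum
          have := cut_unique (X ++ [m]) (q :: Y) (X' ++ [q']) (P :: Y') (by simpa using he)
            (by simpa using hpos)
            (by simp only [List.sum_append, List.sum_cons, List.sum_nil]; omega)
          simp at this
          simp [this]
  · have hs : ((Y.sum : ℤ) - X.sum).natAbs < m := by omega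
    refine ⟨X ++ (m - ((Y.sum : ℤ) - X.sum).natAbs) :: Y, ⟨⟨by simp, ?_⟩, ?_, ?_⟩, ?_⟩
    · intro x hx
      simp only [List.mem_append, List.mem_cons] at hx
      rcases hx with hx | rfl | hx
      · exact hpos x (by simp [hx])
      · omega
      · exact hpos x (by simp [hx])
    · rcases le_total X.sum Y.sum with h | h
      · exact circular_shrink_pos X Y m _ h (by omega) hc
      · exact circular_shrink_neg X Y m _ h (by omega) hc
    · rw [isChild_iff]
      refine Or.inl ⟨X, _, Y, rfl, ?_⟩
      rw [Nat.sub_add_cancel hs.le]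
    · rintro ν ⟨hν, _, hch⟩
      rw [isChild_iff] at hch
      rcases hch with ⟨X', m', Y', rfl, he⟩ | ⟨X', q', Y', P, rfl, he, h3, h4⟩ |
        ⟨X', q', Y', P, rfl, he, h3, h4⟩
      · have hm' := hν.2 m' (by simp)
        have hsum := congrArg List.sum he
        simp only [List.sum_append, List.sum_cons] at hsum
        obtain ⟨rfl, rfl, rfl⟩ := block_unique _ _ _ _ _ _ he (by omega) (by omega)
        simp
      · exfalso
        have hsum := congrArg List.sum he
        simp only [List.sum_append, List.sum_cons] at hsum
        refine no_cut_inside X Y (X' ++ [P]) (q' :: Y') m (by simpa using he) ?_ ?_ <;>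
        · simp only [List.sum_append, List.sum_cons, List.sum_nil]; omega
      · exfalso
        have hsum := congrArg List.sum he
        simp only [List.sum_append, List.sum_cons] at hsum
        refine no_cut_inside X Y (X' ++ [q']) (P :: Y') m (by simpa using he) ?_ ?_ <;>
        · simp only [List.sum_append, List.sum_cons, List.sum_nil]; omega
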